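/- Let Γ be a distance-regular graph with diameter D ≥ 3 and distinct eigenvalues k = θ₀ > θ₁ > ⋯ > θ_D. Let x be a vertex and let λ₂ and λ_k denote the second largest and smallest eigenvalues of the local graph Δ(x). Then −1 − b₁/(θ_D + 1) ≥ λ₂ and λ_k ≥ −1 − b₁/(θ₁ + 1). -/

import Mathlib

/-!
Let `θ` be an eigenvalue of the graph other than the valency `k`, and let `M` be a positive multiple
of the projection onto its eigenspace. `M` is a polynomial in the adjacency matrix, so distance
regularity makes its entries depend only on the distance, say `M y z = f (dist y z)`; the equation
`A M = θ M` determines `f 1` and `f 2` from `f 0` (`exists_cosine_sequence`).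

Restricted to the neighbours of `x`, `M` equals `(f 0 - f 2) I + (f 1 - f 2) B + f 2 J`, where `B` is
the local adjacency matrix and `J` the all-ones matrix. Since `M` is positive semidefinite,
evaluating it at a local eigenvector with eigenvalue `η` and zero sum gives
`(f 0 - f 2) + (f 1 - f 2) η ≥ 0`, which after dividing by positive factors is
`(θ + 1) (1 + η) ≥ -b₁` (`local_inequality`). As `θ_D < -1 < θ₁` (`exists_eigenvalue_lt`,
`exists_eigenvalue_gt`), the choices `θ = θ_D` and `θ = θ₁` yield the upper and the lower bound for
such `η`.

A local eigenvector with nonzero sum belongs to the eigenvalue `a₁ ≥ 0`, which satisfies the lower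
bound trivially. In an orthonormal eigenbasis several vectors may have nonzero sum, but then two of
them have a nontrivial combination with zero sum, so the upper bound holds for `a₁` too.
-/

open SimpleGraph Finset

/-- A distance-regular graph with diameter `D` and intersection numbers `b i`, `c i`. -/
structure SimpleGraph.IsDRG {V : Type*} [Fintype V] [DecidableEq V]
    (G : SimpleGraph V) [DecidableRel G.Adj] (D : ℕ) (b c : ℕ → ℕ) : Prop where
  connected : G.Connected
  dist_le : ∀ x y : V, G.dist x y ≤ D
  exists_dist : ∃ x y : V, G.dist x y = D
  b_eq : ∀ i ≤ D, ∀ x y : V, G.dist x y = i →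
    ((G.neighborFinset y).filter (fun z => G.dist x z = i + 1)).card = b i
  c_eq : ∀ i ≤ D, ∀ x y : V, G.dist x y = i →
    ((G.neighborFinset y).filter (fun z => G.dist x z + 1 = i)).card = c i
  b_last : b D = 0
  c_zero : c 0 = 0

/-- The second largest eigenvalue of the real symmetric matrix `A` is at most `t`:
all eigenvalues except (possibly) one are at most `t`. -/
def Matrix.SecondEigLE {n : Type*} [Fintype n] [DecidableEq n]
    (A : Matrix n n ℝ) (t : ℝ) : Prop :=
  ∀ hA : A.IsHermitian, ∃ i, ∀ j, j ≠ i → hA.eigenvalues j ≤ t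

instance {V : Type*} (G : SimpleGraph V) [DecidableRel G.Adj] (s : Set V) :
    DecidableRel (G.induce s).Adj := fun a b => inferInstanceAs (Decidable (G.Adj a b))

/-- The local graph of `G` at `x`: the subgraph induced on the neighbours of `x`. -/
abbrev SimpleGraph.localGraph {V : Type*} [Fintype V] [DecidableEq V]
    (G : SimpleGraph V) [DecidableRel G.Adj] (x : V) : SimpleGraph (G.neighborSet x) :=
  G.induce (G.neighborSet x)

/-! ### Polynomials in a real symmetric matrix -/

section SpectralTheorem

open Polynomial

variable {V : Type*} [Fintype V] [DecidableEq V] {A : Matrix V V ℝ}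

lemma aeval_eq_conj_diagonal (hA : A.IsHermitian) (q : ℝ[X]) :
    aeval A q = (hA.eigenvectorUnitary : Matrix V V ℝ) *
      Matrix.diagonal (fun j => q.eval (hA.eigenvalues j)) *
      (hA.eigenvectorUnitary : Matrix V V ℝ).conjTranspose := by
  have h1 : aeval A q = Unitary.conjStarAlgAut ℝ _ hA.eigenvectorUnitary
      (aeval (Matrix.diagonal hA.eigenvalues) q) := by
    rw [← aeval_algHom_apply]
    exact congrArg (fun B => aeval B q) hA.spectral_theorem
  have h2 : aeval (Matrix.diagonal hA.eigenvalues) q =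
      Matrix.diagonal (fun j => q.eval (hA.eigenvalues j)) := by
    have := aeval_algHom_apply (Matrix.diagonalAlgHom ℝ (n := V) (α := ℝ)) hA.eigenvalues q
    simp only [Matrix.diagonalAlgHom_apply] at this
    rw [this]
    congr 1
    ext j
    simp
  rw [h1, h2, Unitary.conjStarAlgAut_apply]
  rfl

lemma aeval_posSemidef (hA : A.IsHermitian) (q : ℝ[X])
    (hq : ∀ j, 0 ≤ q.eval (hA.eigenvalues j)) : (aeval A q).PosSemidef := by
  rw [aeval_eq_conj_diagonal hA]
  exact (Matrix.PosSemidef.diagonal (fun j => hq j)).mul_mul_conjTranspose_same _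

lemma aeval_eq_zero_of_eigenvalues (hA : A.IsHermitian) (q : ℝ[X])
    (hq : ∀ j, q.eval (hA.eigenvalues j) = 0) : aeval A q = 0 := by
  rw [aeval_eq_conj_diagonal hA]
  simp [hq]

lemma trace_aeval (hA : A.IsHermitian) (q : ℝ[X]) :
    (aeval A q).trace = ∑ j, q.eval (hA.eigenvalues j) := by
  rw [aeval_eq_conj_diagonal hA, Matrix.trace_mul_comm, ← mul_assoc]
  have : (hA.eigenvectorUnitary : Matrix V V ℝ).conjTranspose *
      (hA.eigenvectorUnitary : Matrix V V ℝ) = 1 :=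
    Unitary.coe_star_mul_self hA.eigenvectorUnitary
  rw [this, one_mul, Matrix.trace_diagonal]

end SpectralTheorem

/-- A positive semidefinite matrix is nonnegative as a quadratic form in the rows and columns
picked out by any family `e` of indices. -/
lemma Matrix.PosSemidef.sum_family_nonneg {V ι : Type*} [Fintype ι] {M : Matrix V V ℝ}
    (hM : M.PosSemidef) (e : ι → V) (v : ι → ℝ) :
    0 ≤ ∑ i, ∑ j, v i * (M (e i) (e j) * v j) := by
  have := (hM.submatrix e).dotProduct_mulVec_nonneg v
  simpa [dotProduct, Matrix.mulVec, Finset.mul_sum] using this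

/-! ### Intersection numbers and the adjacency algebra -/

namespace SimpleGraph.IsDRG

open Polynomial
open scoped Matrix

variable {V : Type*} [Fintype V] [DecidableEq V] {G : SimpleGraph V} [DecidableRel G.Adj]
  {D : ℕ} {b c : ℕ → ℕ}

/-- The three-term recurrence for multiplication by the adjacency matrix, applied to a matrix whose
entries `f (dist z w)` depend only on the distance. At distance `0` the truncated index `0 - 1` is
harmless, as `c 0 = 0`. -/
lemma sum_neighbors (hG : G.IsDRG D b c) (f : ℕ → ℝ) {y z : V} {i : ℕ} (hi : G.dist z y = i) :
    ∑ w ∈ G.neighborFinset y, f (G.dist z w) =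
      b 0 * f i + b i * (f (i + 1) - f i) + c i * (f (i - 1) - f i) := by
  have hiD : i ≤ D := hi ▸ hG.dist_le z y
  have hb := hG.b_eq i hiD z y hi
  have hc := hG.c_eq i hiD z y hi
  have hk : (G.neighborFinset y).card = b 0 := by
    rw [← hG.b_eq 0 (Nat.zero_le _) y y dist_self, Finset.filter_true_of_mem]
    intro w hw
    exact dist_eq_one_iff_adj.2 ((G.mem_neighborFinset y w).1 hw)
  have key : ∀ w ∈ G.neighborFinset y, f (G.dist z w) =
      f i + (if G.dist z w = i + 1 then (f (i + 1) - f i) else 0) +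
        (if G.dist z w + 1 = i then (f (i - 1) - f i) else 0) := by
    intro w hw
    have hadj := (G.mem_neighborFinset y w).1 hw
    have h1 := hG.connected.dist_triangle (u := z) (v := y) (w := w)
    have h2 := hG.connected.dist_triangle (u := z) (v := w) (w := y)
    have h3 := dist_eq_one_iff_adj.2 hadj
    have h4 := dist_eq_one_iff_adj.2 hadj.symm
    rcases (by omega : G.dist z w = i + 1 ∨ G.dist z w + 1 = i ∨ G.dist z w = i) with h | h | h
    · rw [if_pos h, if_neg (by omega), h]; ring
    · rw [if_neg (by omega), if_pos h, show G.dist z w = i - 1 by omega]; ring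
    · rw [if_neg (by omega), if_neg (by omega), h]; ring
  rw [Finset.sum_congr rfl key, Finset.sum_add_distrib, Finset.sum_add_distrib,
    ← Finset.sum_filter, ← Finset.sum_filter, Finset.sum_const, Finset.sum_const, Finset.sum_const,
    hb, hc, hk]
  simp only [nsmul_eq_mul]

lemma c_one (hG : G.IsDRG D b c) (hD : 3 ≤ D) {x y : V} (h : G.Adj x y) : c 1 = 1 := by
  rw [← hG.c_eq 1 (by omega) x y (dist_eq_one_iff_adj.2 h), Finset.card_eq_one]
  refine ⟨x, ?_⟩
  ext z
  simp only [Finset.mem_filter, mem_neighborFinset, Finset.mem_singleton]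
  constructor
  · rintro ⟨-, hz⟩
    exact ((hG.connected.dist_eq_zero_iff).1 (by omega)).symm
  · rintro rfl
    exact ⟨h.symm, by simp⟩

/-- Every polynomial in the adjacency matrix has entries depending only on the distance. -/
lemma aeval_adjMatrix_apply (hG : G.IsDRG D b c) (q : ℝ[X]) :
    ∃ f : ℕ → ℝ, ∀ y z, aeval (G.adjMatrix ℝ) q y z = f (G.dist z y) := by
  induction q using Polynomial.induction_on with
  | C r =>
    refine ⟨fun i => if i = 0 then r else 0, fun y z => ?_⟩
    simp only [aeval_C, Matrix.algebraMap_matrix_apply, Algebra.algebraMap_self, RingHom.id_apply,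
      hG.connected.dist_eq_zero_iff, eq_comm (a := z)]
  | add p q hp hq =>
    obtain ⟨f, hf⟩ := hp
    obtain ⟨g, hg⟩ := hq
    exact ⟨fun i => f i + g i, fun y z => by rw [map_add, Matrix.add_apply, hf, hg]⟩
  | monomial n r h =>
    obtain ⟨f, hf⟩ := h
    refine ⟨fun i => b 0 * f i + b i * (f (i + 1) - f i) + c i * (f (i - 1) - f i),
      fun y z => ?_⟩
    have e : aeval (G.adjMatrix ℝ) (C r * X ^ (n + 1)) =
        G.adjMatrix ℝ * aeval (G.adjMatrix ℝ) (C r * X ^ n) := by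
      rw [pow_succ', ← mul_assoc, mul_comm (C r) X, mul_assoc, map_mul, aeval_X]
    have e2 := adjMatrix_mul_apply (α := ℝ) G (aeval (G.adjMatrix ℝ) (C r * X ^ n)) y z
    rw [← e] at e2
    exact e2.trans ((Finset.sum_congr rfl fun w _ => hf w z).trans (hG.sum_neighbors f rfl))

/-- An induced path on three vertices, found on a geodesic of length `D`. -/
lemma exists_path_two (hG : G.IsDRG D b c) (hD : 3 ≤ D) :
    ∃ x y z : V, G.Adj x y ∧ G.Adj y z ∧ ¬ G.Adj x z ∧ x ≠ z := by
  obtain ⟨u, v, huv⟩ := hG.exists_dist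
  obtain ⟨p, hp⟩ := hG.connected.exists_walk_length_eq_dist u v
  have hlen : 1 < G.dist u v := by omega
  obtain ⟨x, y, z, h⟩ := p.exists_adj_adj_not_adj_ne hp hlen
  exact ⟨x, y, z, h⟩

lemma pos_degree (hG : G.IsDRG D b c) (hD : 3 ≤ D) : 0 < b 0 := by
  obtain ⟨x, y, -, hxy, -⟩ := hG.exists_path_two hD
  rw [← hG.b_eq 0 (Nat.zero_le _) x x dist_self, Finset.card_pos]
  exact ⟨y, by simp [hxy]⟩

lemma nonempty_neighborSet (hG : G.IsDRG D b c) (hD : 3 ≤ D) (x : V) :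
    Nonempty (G.neighborSet x) := by
  have h := hG.pos_degree hD
  rw [← hG.b_eq 0 (Nat.zero_le _) x x dist_self, Finset.card_pos] at h
  obtain ⟨y, hy⟩ := h
  exact ⟨⟨y, by simpa using (Finset.mem_filter.1 hy).1⟩⟩

/-- Each row of the local adjacency matrix sums to `a₁ = b₀ - b₁ - 1`. -/
lemma localGraph_row_sum (hG : G.IsDRG D b c) (hD : 3 ≤ D) (x : V) (y : G.neighborSet x) :
    ∑ z, (G.localGraph x).adjMatrix ℝ y z = (b 0 : ℝ) - b 1 - 1 := by
  have hxy : G.Adj x y := y.2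
  have h := hG.sum_neighbors (fun i => if i = 1 then 1 else 0) (dist_eq_one_iff_adj.2 hxy)
  rw [hG.c_one hD hxy] at h
  have h2 : ∑ w ∈ G.neighborFinset y, (if G.dist x w = 1 then (1 : ℝ) else 0) =
      ∑ z, (G.localGraph x).adjMatrix ℝ y z := by
    have h3 : ∑ z : G.neighborSet x, (G.localGraph x).adjMatrix ℝ y z =
        ∑ w ∈ G.neighborFinset x, if G.Adj y w then (1 : ℝ) else 0 := by
      rw [Finset.sum_subtype (G.neighborFinset x) (p := (· ∈ G.neighborSet x)) (by simp)]
      exact Finset.sum_congr rfl fun z _ => by simp [adjMatrix_apply]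
    rw [h3, ← Finset.sum_filter, ← Finset.sum_filter]
    congr 1
    ext w
    simp [and_comm, dist_eq_one_iff_adj]
  rw [← h2, h]
  norm_num
  ring

/-! ### The quadratic form of an eigenspace projection on a local graph -/

/-- For an eigenvalue `θ` of the graph: a nonzero positive semidefinite matrix with entries depending
only on the distance, whose values `f` are up to scaling the cosine sequence of `θ`; the last two
clauses are its recurrence. The matrix is `q(A)`, where `q` is a square vanishing at all eigenvalues
other than `θ`, hence a multiple of the projection onto the `θ`-eigenspace. -/
lemma exists_cosine_sequence (hG : G.IsDRG D b c) (hD : 3 ≤ D)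
    (hA : (G.adjMatrix ℝ).IsHermitian) (j₀ : V) :
    ∃ (f : ℕ → ℝ) (M : Matrix V V ℝ), M.PosSemidef ∧ (∀ y z, M y z = f (G.dist z y)) ∧ 0 < f 0 ∧
      hA.eigenvalues j₀ * f 0 = b 0 * f 1 ∧
      hA.eigenvalues j₀ * f 1 = b 0 * f 1 + b 1 * (f 2 - f 1) + (f 0 - f 1) := by
  classical
  set θ := hA.eigenvalues j₀ with hθ
  set q : ℝ[X] := ∏ t ∈ (Finset.univ.image hA.eigenvalues).erase θ, (X - C t) ^ 2 with hq
  have hqe : ∀ s : ℝ, q.eval s =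
      ∏ t ∈ (Finset.univ.image hA.eigenvalues).erase θ, (s - t) ^ 2 := by
    intro s
    simp [hq, eval_prod]
  have hnn : ∀ s : ℝ, 0 ≤ q.eval s := fun s => by
    rw [hqe]
    exact Finset.prod_nonneg fun t _ => sq_nonneg _
  have hpos : 0 < q.eval θ := by
    rw [hqe]
    refine Finset.prod_pos fun t ht => ?_
    have := sub_ne_zero.2 (Finset.ne_of_mem_erase ht).symm
    positivity
  obtain ⟨f, hf⟩ := hG.aeval_adjMatrix_apply q
  have hM := aeval_posSemidef hA q fun j => hnn _
  have hf0 : 0 < f 0 := by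
    have htr := trace_aeval hA q
    have h1 : (aeval (G.adjMatrix ℝ) q).trace = Fintype.card V * f 0 := by
      simp [Matrix.trace, Matrix.diag, hf]
    have h2 : 0 < ∑ j, q.eval (hA.eigenvalues j) :=
      Finset.sum_pos' (fun j _ => hnn _) ⟨j₀, Finset.mem_univ _, hpos⟩
    rw [← htr, h1] at h2
    exact pos_of_mul_pos_right h2 (Nat.cast_nonneg _)
  have hzero : aeval (G.adjMatrix ℝ) (X * q - C θ * q) = 0 := by
    refine aeval_eq_zero_of_eigenvalues hA _ fun j => ?_
    have : (hA.eigenvalues j - θ) * q.eval (hA.eigenvalues j) = 0 := by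
      by_cases h : hA.eigenvalues j = θ
      · rw [h]; ring
      · rw [hqe, Finset.prod_eq_zero (i := hA.eigenvalues j), mul_zero]
        · exact Finset.mem_erase.2 ⟨h, Finset.mem_image_of_mem _ (Finset.mem_univ _)⟩
        · ring
    simp only [eval_sub, eval_mul, eval_X, eval_C]
    linarith
  have hAM : G.adjMatrix ℝ * aeval (G.adjMatrix ℝ) q = θ • aeval (G.adjMatrix ℝ) q := by
    rw [map_sub, map_mul, map_mul, aeval_X, aeval_C, sub_eq_zero] at hzero
    rw [hzero, Algebra.smul_def]
  have hrec : ∀ y z, θ * f (G.dist z y) = b 0 * f (G.dist z y)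
      + b (G.dist z y) * (f (G.dist z y + 1) - f (G.dist z y))
      + c (G.dist z y) * (f (G.dist z y - 1) - f (G.dist z y)) := by
    intro y z
    rw [← hG.sum_neighbors f rfl]
    have h := congrFun (congrFun hAM y) z
    rw [adjMatrix_mul_apply, Matrix.smul_apply, smul_eq_mul, hf] at h
    rw [← h]
    exact Finset.sum_congr rfl fun w _ => hf w z
  obtain ⟨x, y, -, hxy, -⟩ := hG.exists_path_two hD
  refine ⟨f, _, hM, hf, hf0, ?_, ?_⟩
  · have := hrec x x
    rw [dist_self, hG.c_zero] at this
    rw [this]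
    push_cast
    ring
  · have := hrec y x
    rw [dist_eq_one_iff_adj.2 hxy, hG.c_one hD hxy] at this
    rw [this]
    push_cast
    ring

/-- Terwilliger's inequality for a local eigenvector with zero sum. The matrix of
`exists_cosine_sequence`, restricted to the neighbours of `x`, is a combination of the
identity, the local adjacency matrix and the all-ones matrix; the last of these vanishes on vectors
with zero sum. -/
lemma local_inequality (hG : G.IsDRG D b c) (hD : 3 ≤ D)
    (hA : (G.adjMatrix ℝ).IsHermitian) (j₀ : V) (hlt : hA.eigenvalues j₀ < b 0)
    (x : V) {v : G.neighborSet x → ℝ} {η : ℝ} (hv : v ≠ 0)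
    (hη : (G.localGraph x).adjMatrix ℝ *ᵥ v = η • v) (hsum : ∑ y, v y = 0) :
    0 ≤ (hA.eigenvalues j₀ + 1) * (1 + η) + b 1 := by
  obtain ⟨f, M, hM, hf, hf0, h0, h1⟩ := hG.exists_cosine_sequence hD hA j₀
  set θ := hA.eigenvalues j₀
  have hentry : ∀ y z : G.neighborSet x, M y z = (f 0 - f 2) * (if y = z then 1 else 0)
      + (f 1 - f 2) * (G.localGraph x).adjMatrix ℝ y z + f 2 := by
    intro y z
    rw [hf]
    have hxy : G.Adj x y := y.2
    have hxz : G.Adj x z := z.2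
    rw [adjMatrix_apply]
    by_cases hyz : y = z
    · subst hyz
      simp
    · have hne : (z : V) ≠ y := fun h => hyz (Subtype.ext h.symm)
      by_cases hadj : G.Adj y z
      · have : (G.localGraph x).Adj y z := hadj
        rw [dist_eq_one_iff_adj.2 hadj.symm, if_neg hyz, if_pos this]
        ring
      · have : ¬ (G.localGraph x).Adj y z := hadj
        have h2 := hG.connected.one_lt_dist_of_ne_of_not_adj hne fun h => hadj h.symm
        have h3 := hG.connected.dist_triangle (u := (z : V)) (v := x) (w := y)
        rw [dist_eq_one_iff_adj.2 hxy, dist_eq_one_iff_adj.2 hxz.symm] at h3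
        rw [show G.dist z y = 2 by omega, if_neg hyz, if_neg this]
        ring
  have hrow : ∀ y : G.neighborSet x, ∑ z : G.neighborSet x, v y * (M y z * v z) =
      ((f 0 - f 2) + (f 1 - f 2) * η) * v y ^ 2 := by
    intro y
    have hy : ∑ z, (G.localGraph x).adjMatrix ℝ y z * v z = η * v y := congrFun hη y
    calc ∑ z : G.neighborSet x, v y * (M y z * v z)
        = ∑ z : G.neighborSet x, (v y * (f 0 - f 2) * (if y = z then v z else 0)
          + v y * (f 1 - f 2) * ((G.localGraph x).adjMatrix ℝ y z * v z)
          + v y * f 2 * v z) := by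
          refine Finset.sum_congr rfl fun z _ => ?_
          rw [hentry]
          split_ifs <;> ring
      _ = _ := by
          rw [Finset.sum_add_distrib, Finset.sum_add_distrib, ← Finset.mul_sum, ← Finset.mul_sum,
            ← Finset.mul_sum, hsum, hy, Finset.sum_ite_eq, if_pos (Finset.mem_univ _)]
          ring
  have hq := hM.sum_family_nonneg (fun y : G.neighborSet x => (y : V)) v
  rw [Finset.sum_congr rfl fun y _ => hrow y, ← Finset.mul_sum] at hq
  have hvpos : 0 < ∑ y, v y ^ 2 := by
    obtain ⟨y, hy⟩ := Function.ne_iff.1 hv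
    have hy' : v y ≠ 0 := hy
    exact Finset.sum_pos' (fun _ _ => sq_nonneg _) ⟨y, Finset.mem_univ _, by positivity⟩
  have hq' := nonneg_of_mul_nonneg_left hq hvpos
  have hk : (0 : ℝ) < b 0 := by exact_mod_cast hG.pos_degree hD
  have hb1 : (0 : ℝ) ≤ b 1 := Nat.cast_nonneg _
  -- Eliminating `f 1` and `f 2` by the recurrence, a factor `(b 0 - θ) * f 0` splits off.
  have hid : b 0 * (b 1 * ((f 0 - f 2) + (f 1 - f 2) * η)) =
      ((b 0 - θ) * f 0) * ((θ + 1) * (1 + η) + b 1) := by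
    linear_combination
      (-(b 0 - 1 - b 1 - θ + η * (b 0 - 1 - θ))) * h0 + b 0 * (1 + η) * h1
  have hpos : 0 < (b 0 - θ) * f 0 := mul_pos (sub_pos.2 hlt) hf0
  have hle : 0 ≤ ((b 0 - θ) * f 0) * ((θ + 1) * (1 + η) + b 1) := by
    rw [← hid]
    positivity
  exact nonneg_of_mul_nonneg_right hle hpos

/-! ### The signs of `θ₁ + 1` and `θ_D + 1` -/

/-- An induced path on three vertices forces an eigenvalue below `-1`. -/
lemma exists_eigenvalue_lt (hG : G.IsDRG D b c) (hD : 3 ≤ D)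
    (hA : (G.adjMatrix ℝ).IsHermitian) : ∃ j, hA.eigenvalues j < -1 := by
  by_contra! h
  have hM := aeval_posSemidef hA (X + C (1 : ℝ)) fun j => by
    simp only [eval_add, eval_X, eval_C]
    linarith [h j]
  have hexp : ∀ s t, aeval (G.adjMatrix ℝ) (X + C (1 : ℝ)) s t =
      (if G.Adj s t then 1 else 0) + if s = t then 1 else 0 := by
    intro s t
    rw [map_add, aeval_X, aeval_C, map_one, Matrix.add_apply, adjMatrix_apply, Matrix.one_apply]
  generalize aeval (G.adjMatrix ℝ) (X + C (1 : ℝ)) = M at hM hexp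
  obtain ⟨x, y, z, hxy, hyz, hxz, hne⟩ := hG.exists_path_two hD
  have hq := hM.sum_family_nonneg ![x, y, z] ![1, -1, 1]
  have hzx : ¬ G.Adj z x := fun h => hxz h.symm
  simp only [Fin.sum_univ_three, Matrix.cons_val_zero, Matrix.cons_val_one, Matrix.cons_val, hexp,
    hxy, hxy.symm, hyz, hyz.symm, hxz, hzx, hne, hne.symm, hxy.ne, hxy.ne.symm, hyz.ne,
    hyz.ne.symm, SimpleGraph.irrefl, if_true, if_false] at hq
  norm_num at hq

/-- If all eigenvalues but the valency were at most `-1`, then `(A - k)(A + 1)` would be positive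
semidefinite with zero diagonal, hence zero off the diagonal as well; but its entries at distance
two count common neighbours. -/
lemma exists_eigenvalue_gt (hG : G.IsDRG D b c) (hD : 3 ≤ D)
    (hA : (G.adjMatrix ℝ).IsHermitian) (hle : ∀ j, hA.eigenvalues j ≤ b 0) :
    ∃ j, hA.eigenvalues j ≠ b 0 ∧ -1 < hA.eigenvalues j := by
  by_contra! h
  have hM := aeval_posSemidef hA ((X - C (b 0 : ℝ)) * (X + C (1 : ℝ))) fun j => by
    simp only [eval_mul, eval_sub, eval_add, eval_X, eval_C]
    by_cases hj : hA.eigenvalues j = b 0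
    · simp [hj]
    · exact mul_nonneg_of_nonpos_of_nonpos (by linarith [hle j]) (by linarith [h j hj])
  obtain ⟨f, hf⟩ := hG.aeval_adjMatrix_apply ((X - C (b 0 : ℝ)) * (X + C (1 : ℝ)))
  obtain ⟨x, y, z, hxy, hyz, hxz, hne⟩ := hG.exists_path_two hD
  have hexp : ∀ s t, aeval (G.adjMatrix ℝ) ((X - C (b 0 : ℝ)) * (X + C (1 : ℝ))) s t =
      (∑ w ∈ G.neighborFinset s, if G.Adj w t then (1 : ℝ) else 0)
        + (1 - b 0) * (if G.Adj s t then 1 else 0) - b 0 * (if s = t then 1 else 0) := by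
    intro s t
    have e : aeval (G.adjMatrix ℝ) ((X - C (b 0 : ℝ)) * (X + C (1 : ℝ))) =
        G.adjMatrix ℝ * G.adjMatrix ℝ + (1 - b 0 : ℝ) • G.adjMatrix ℝ
          - (b 0 : ℝ) • (1 : Matrix V V ℝ) := by
      simp only [map_mul, map_sub, map_add, aeval_X, aeval_C, Algebra.algebraMap_eq_smul_one,
        sub_mul, mul_add, smul_mul_assoc, one_mul, mul_one, one_smul, sub_smul]
      abel
    rw [e, Matrix.sub_apply, Matrix.add_apply, adjMatrix_mul_apply, Matrix.smul_apply,
      Matrix.smul_apply, Matrix.one_apply, adjMatrix_apply]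
    simp [adjMatrix_apply]
  have hdiag : ∀ s, aeval (G.adjMatrix ℝ) ((X - C (b 0 : ℝ)) * (X + C (1 : ℝ))) s s = 0 := by
    intro s
    have hs := hG.sum_neighbors (fun i => if i = 1 then 1 else 0) (dist_self (G := G) (v := s))
    simp only [dist_eq_one_iff_adj, hG.c_zero] at hs
    rw [hexp, Finset.sum_congr rfl fun w _ => if_congr (G.adj_comm w s) rfl rfl, hs]
    simp
  have hoff : 0 < aeval (G.adjMatrix ℝ) ((X - C (b 0 : ℝ)) * (X + C (1 : ℝ))) x z := by
    rw [hexp, if_neg hxz, if_neg hne, mul_zero, mul_zero, add_zero, sub_zero]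
    refine Finset.sum_pos' (fun w _ => by split_ifs <;> norm_num) ⟨y, ?_, ?_⟩
    · simpa using hxy
    · rw [if_pos hyz]; exact one_pos
  have hsymm : aeval (G.adjMatrix ℝ) ((X - C (b 0 : ℝ)) * (X + C (1 : ℝ))) z x =
      aeval (G.adjMatrix ℝ) ((X - C (b 0 : ℝ)) * (X + C (1 : ℝ))) x z := by
    rw [hf, hf, dist_comm]
  have hq := hM.sum_family_nonneg ![x, z] ![1, -1]
  simp only [Fin.sum_univ_two, Matrix.cons_val_zero, Matrix.cons_val_one, hdiag, hsymm] at hq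
  linarith

/-! ### The local valency as an eigenvalue -/

/-- The all-ones vector is a left eigenvector of the local adjacency matrix for `a₁`. -/
lemma local_eigenvalue_mul_sum (hG : G.IsDRG D b c) (hD : 3 ≤ D) (x : V)
    {v : G.neighborSet x → ℝ} {η : ℝ}
    (hη : (G.localGraph x).adjMatrix ℝ *ᵥ v = η • v) :
    η * ∑ y, v y = ((b 0 : ℝ) - b 1 - 1) * ∑ y, v y := by
  have h : ∀ y, ∑ z, (G.localGraph x).adjMatrix ℝ y z * v z = η * v y := fun y => congrFun hη y
  rw [Finset.mul_sum, ← Finset.sum_congr rfl fun y _ => h y, Finset.sum_comm, Finset.mul_sum]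
  refine Finset.sum_congr rfl fun z _ => ?_
  rw [← Finset.sum_mul, ← hG.localGraph_row_sum hD x z]
  congr 1
  exact Finset.sum_congr rfl fun y _ => by simp only [adjMatrix_apply, SimpleGraph.adj_comm]

end SimpleGraph.IsDRG

theorem terwilliger_local_eig_bound {V : Type*} [Fintype V] [DecidableEq V]
    (G : SimpleGraph V) [DecidableRel G.Adj] (D : ℕ) (b c : ℕ → ℕ) (hD : 3 ≤ D)
    (hG : G.IsDRG D b c)
    (θ : Fin (D + 1) → ℝ) (hmono : StrictAnti θ) (hθ0 : θ ⟨0, by omega⟩ = b 0)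
    (hspec1 : ∀ hA : (G.adjMatrix ℝ).IsHermitian, ∀ j, ∃ i, hA.eigenvalues j = θ i)
    (hspec2 : ∀ hA : (G.adjMatrix ℝ).IsHermitian, ∀ i, ∃ j, hA.eigenvalues j = θ i)
    (x : V) :
    (∀ hA : ((G.localGraph x).adjMatrix ℝ).IsHermitian,
      ∃ i₀, ∀ j, j ≠ i₀ → hA.eigenvalues j ≤ -1 - (b 1 : ℝ) / (θ ⟨D, by omega⟩ + 1)) ∧
    (∀ hA : ((G.localGraph x).adjMatrix ℝ).IsHermitian,
      ∀ j, -1 - (b 1 : ℝ) / (θ ⟨1, by omega⟩ + 1) ≤ hA.eigenvalues j) := by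

  have hAG : (G.adjMatrix ℝ).IsHermitian := (G.isSymm_adjMatrix (α := ℝ))
  have hθi : ∀ i : Fin (D + 1), i ≠ ⟨0, by omega⟩ → θ i < b 0 := fun i hi => by
    rw [← hθ0]
    exact hmono (Fin.lt_def.2 (Nat.pos_of_ne_zero fun h => hi (Fin.ext h)))
  have hθD : θ ⟨D, by omega⟩ < -1 := by
    obtain ⟨j, hj⟩ := hG.exists_eigenvalue_lt hD hAG
    obtain ⟨i, hi⟩ := hspec1 hAG j
    rw [hi] at hj
    exact (hmono.antitone (Fin.le_def.2 (Nat.le_of_lt_succ i.2))).trans_lt hj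
  have hθ1 : -1 < θ ⟨1, by omega⟩ := by
    obtain ⟨j, hne, hj⟩ := hG.exists_eigenvalue_gt hD hAG fun j => by
      obtain ⟨i, hi⟩ := hspec1 hAG j
      rw [hi, ← hθ0]
      exact hmono.antitone (Fin.le_def.2 (Nat.zero_le _))
    obtain ⟨i, hi⟩ := hspec1 hAG j
    rw [hi] at hj hne
    refine hj.trans_le (hmono.antitone (Fin.le_def.2 (Nat.one_le_iff_ne_zero.2 fun h => hne ?_)))
    rw [← hθ0]
    exact congrArg θ (Fin.ext h)
  have hineq : ∀ i : Fin (D + 1), i ≠ ⟨0, by omega⟩ → ∀ (v : G.neighborSet x → ℝ) (η : ℝ), v ≠ 0 →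
      ((G.localGraph x).adjMatrix ℝ).mulVec v = η • v → ∑ y, v y = 0 →
      0 ≤ (θ i + 1) * (1 + η) + b 1 := by
    intro i hi v η hv hη hsum
    obtain ⟨j, hj⟩ := hspec2 hAG i
    rw [← hj]
    exact hG.local_inequality hD hAG j (hj ▸ hθi i hi) x hv hη hsum
  have hupper : ∀ (v : G.neighborSet x → ℝ) (η : ℝ), v ≠ 0 →
      ((G.localGraph x).adjMatrix ℝ).mulVec v = η • v → ∑ y, v y = 0 →
      η ≤ -1 - (b 1 : ℝ) / (θ ⟨D, by omega⟩ + 1) := by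
    intro v η hv hη hsum
    have h := hineq ⟨D, by omega⟩ (by simp [Fin.ext_iff]; omega) v η hv hη hsum
    have hneg : θ ⟨D, by omega⟩ + 1 < 0 := by linarith
    have : (b 1 : ℝ) / (θ ⟨D, by omega⟩ + 1) ≤ -(1 + η) := by
      rw [div_le_iff_of_neg hneg]
      linarith
    linarith
  have hnz : ∀ (hA : ((G.localGraph x).adjMatrix ℝ).IsHermitian) (j),
      (hA.eigenvectorBasis j : G.neighborSet x → ℝ) ≠ 0 := fun hA j h =>
    hA.eigenvectorBasis.orthonormal.ne_zero j (by ext y; exact congrFun h y)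
  have ha1 : ∀ (hA : ((G.localGraph x).adjMatrix ℝ).IsHermitian) (j),
      ∑ y, hA.eigenvectorBasis j y ≠ 0 → hA.eigenvalues j = (b 0 : ℝ) - b 1 - 1 :=
    fun hA j hs => mul_right_cancel₀ hs
      (hG.local_eigenvalue_mul_sum hD x (hA.mulVec_eigenvectorBasis j))
  refine ⟨fun hA => ?_, fun hA j => ?_⟩
  · by_cases hall : ∀ j, hA.eigenvalues j ≤ -1 - (b 1 : ℝ) / (θ ⟨D, by omega⟩ + 1)
    · obtain ⟨i₀⟩ := hG.nonempty_neighborSet hD x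
      exact ⟨i₀, fun j _ => hall j⟩
    · push Not at hall
      obtain ⟨i₀, hi₀⟩ := hall
      refine ⟨i₀, fun j hj => ?_⟩
      by_cases hs : ∑ y, hA.eigenvectorBasis j y = 0
      · exact hupper _ _ (hnz hA j) (hA.mulVec_eigenvectorBasis j) hs
      have hs₀ : ∑ y, hA.eigenvectorBasis i₀ y ≠ 0 := fun h =>
        absurd (hupper _ _ (hnz hA i₀) (hA.mulVec_eigenvectorBasis i₀) h) hi₀.not_ge
      -- Both eigenvalues equal `a₁`, so a combination of the eigenvectors has zero sum.
      set s := ∑ y, hA.eigenvectorBasis j y with hsdef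
      set s₀ := ∑ y, hA.eigenvectorBasis i₀ y with hs₀def
      refine hupper (s₀ • (hA.eigenvectorBasis j : G.neighborSet x → ℝ)
        - s • (hA.eigenvectorBasis i₀ : G.neighborSet x → ℝ)) _ ?_ ?_ ?_
      · intro h
        have hlin : s₀ • hA.eigenvectorBasis j - s • hA.eigenvectorBasis i₀ = 0 := by
          ext y
          exact congrFun h y
        have hin := congrArg (fun w => inner ℝ (hA.eigenvectorBasis j) w) hlin
        simp only [inner_sub_right, inner_smul_right, inner_zero_right,
          hA.eigenvectorBasis.orthonormal.inner_eq_zero hj,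
          real_inner_self_eq_norm_sq, hA.eigenvectorBasis.orthonormal.1] at hin
        exact hs₀ (by linarith)
      · rw [Matrix.mulVec_sub, Matrix.mulVec_smul, Matrix.mulVec_smul,
          hA.mulVec_eigenvectorBasis, hA.mulVec_eigenvectorBasis, ha1 hA j hs, ha1 hA i₀ hs₀,
          smul_sub, smul_comm, smul_comm s]
      · simp only [Pi.sub_apply, Pi.smul_apply, smul_eq_mul, Finset.sum_sub_distrib,
          ← Finset.mul_sum, ← hsdef, ← hs₀def]
        ring
  · have hpos : 0 < θ ⟨1, by omega⟩ + 1 := by linarith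
    by_cases hs : ∑ y, hA.eigenvectorBasis j y = 0
    · have h := hineq ⟨1, by omega⟩ (by simp [Fin.ext_iff]) _ _ (hnz hA j)
        (hA.mulVec_eigenvectorBasis j) hs
      have : -(1 + hA.eigenvalues j) ≤ (b 1 : ℝ) / (θ ⟨1, by omega⟩ + 1) := by
        rw [le_div_iff₀ hpos]
        linarith
      linarith
    · have hnn : 0 ≤ hA.eigenvalues j := by
        rw [ha1 hA j hs, ← hG.localGraph_row_sum hD x j]
        exact Finset.sum_nonneg fun z _ => by rw [adjMatrix_apply]; split_ifs <;> norm_num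
      have : 0 ≤ (b 1 : ℝ) / (θ ⟨1, by omega⟩ + 1) := by positivity
      linarith
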